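/- For every real ℓ with 0 < ℓ ≤ 1 and every ρ with 0 ≤ ρ ≤ arcsinh(1/sinh(ℓ/2)), one has ℓ²·cosh²ρ ≤ 5. In particular, ℓ² + ℓ²/sinh²(ℓ/2) ≤ 5. -/

import Mathlib

open Real

theorem cosh_sq_le_one_add_sq_of_abs_le_abs_arsinh {x y : ℝ} (h : |x| ≤ |arsinh y|) :
    cosh x ^ 2 ≤ 1 + y ^ 2 := by
  calc cosh x ^ 2 ≤ cosh (arsinh y) ^ 2 :=
        pow_le_pow_left₀ (cosh_pos x).le (cosh_le_cosh.mpr h) 2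
    _ = 1 + y ^ 2 := by rw [cosh_sq', sinh_arsinh]

theorem sq_lt_sinh_sq {x : ℝ} (hx : x ≠ 0) : x ^ 2 < sinh x ^ 2 := by
  rw [sq_lt_sq, abs_sinh]
  exact self_lt_sinh_iff.mpr (abs_pos.mpr hx)

theorem sq_div_sinh_sq_lt_one {x : ℝ} (hx : x ≠ 0) : x ^ 2 / sinh x ^ 2 < 1 :=
  (div_lt_one ((sq_nonneg x).trans_lt (sq_lt_sinh_sq hx))).mpr (sq_lt_sinh_sq hx)

theorem stmt3_general {ℓ : ℝ} (hℓ : ℓ ≠ 0) :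
    (∀ ρ : ℝ, |ρ| ≤ |arsinh (1 / sinh (ℓ / 2))| → ℓ ^ 2 * cosh ρ ^ 2 < ℓ ^ 2 + 4) ∧
      ℓ ^ 2 + ℓ ^ 2 / sinh (ℓ / 2) ^ 2 < ℓ ^ 2 + 4 := by
  have sinh_bound : ℓ ^ 2 + ℓ ^ 2 / sinh (ℓ / 2) ^ 2 < ℓ ^ 2 + 4 := by
    calc ℓ ^ 2 + ℓ ^ 2 / sinh (ℓ / 2) ^ 2
        = ℓ ^ 2 + 4 * ((ℓ / 2) ^ 2 / sinh (ℓ / 2) ^ 2) := by ring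
      _ < ℓ ^ 2 + 4 := by linarith [sq_div_sinh_sq_lt_one (div_ne_zero hℓ two_ne_zero)]
  refine ⟨fun ρ hρ => ?_, sinh_bound⟩
  calc ℓ ^ 2 * cosh ρ ^ 2 ≤ ℓ ^ 2 * (1 + (1 / sinh (ℓ / 2)) ^ 2) := by
        gcongr
        exact cosh_sq_le_one_add_sq_of_abs_le_abs_arsinh hρ
    _ = ℓ ^ 2 + ℓ ^ 2 / sinh (ℓ / 2) ^ 2 := by ring
    _ < ℓ ^ 2 + 4 := sinh_bound

/-- For every `0 < ℓ ≤ 1` and every `ρ ∈ [0, arcsinh(1/sinh(ℓ/2))]`, one has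
`ℓ²·cosh²ρ ≤ 5`; in particular `ℓ² + ℓ²/sinh²(ℓ/2) ≤ 5`. -/
theorem stmt3 (ℓ : ℝ) (hℓ0 : 0 < ℓ) (hℓ1 : ℓ ≤ 1) :
    (∀ ρ : ℝ, 0 ≤ ρ → ρ ≤ Real.arsinh (1 / Real.sinh (ℓ / 2)) →
      ℓ ^ 2 * Real.cosh ρ ^ 2 ≤ 5) ∧
    ℓ ^ 2 + ℓ ^ 2 / Real.sinh (ℓ / 2) ^ 2 ≤ 5 := by
  have sq_add_four_le : ℓ ^ 2 + 4 ≤ 5 := by linarith [pow_le_one₀ (n := 2) hℓ0.le hℓ1]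
  exact (stmt3_general hℓ0.ne').imp
    (fun h ρ hρ0 hρ => (h ρ (abs_le_abs_of_nonneg hρ0 hρ)).le.trans sq_add_four_le)
    (fun h => h.le.trans sq_add_four_le)
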